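/- Suppose p ≥ 3 and let G be a p-central finite p-group, i.e., Ω_1(G) ≤ Z(G). If d(G) = log_p |Ω_1(G)|, then G is powerful. -/

import Mathlib

/-- The minimal size of a generating set of a group. -/
noncomputable def genNum (G : Type*) [Group G] : ℕ :=
  sInf {n | ∃ S : Finset G, S.card = n ∧ Subgroup.closure (S : Set G) = ⊤}

/-- `Ω₁(G)`: the subgroup generated by the elements of order dividing `p`. -/
def Omega1 (p : ℕ) (G : Type*) [Group G] : Subgroup G :=
  Subgroup.closure {g : G | g ^ p = 1}

/-- `G^p`: the subgroup generated by the `p`-th powers. -/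
def pPowFin (p : ℕ) (G : Type*) [Group G] : Subgroup G :=
  Subgroup.closure {x : G | ∃ g : G, g ^ p = x}
/-!
Let `G` be nilpotent, `n` odd and suppose all `x` with `x ^ n = 1` are central. If
`(b * a) ^ n = a ^ n`, then also `(a * b) ^ n = a ^ n`, so
`(⁅a, b⁆ * (b * a)) ^ n = (b * a) ^ n`, and `⁅a, b⁆` lies lower in the upper central series than
`b`. By induction `⁅a, b⁆ ^ n = 1`, hence `⁅a, b⁆` is central, the class two formula gives
`(b * a) ^ n = b ^ n * a ^ n`, and `b ^ n = 1`. So the `n`-th power map separates the cosets of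
`Ω₁(G)`, which for finite `G` yields Mann's inequality `|G : G^n| ≤ |Ω₁(G)|`.

For a finite `p`-group with `p` odd, Burnside's basis theorem and `d(G) = log_p |Ω₁(G)|` then give
`|G : G^p| ≤ p ^ d(G) ≤ |G : Φ(G)|`. Since `G^p ≤ Φ(G)`, the two subgroups coincide, and `Φ(G)`
contains the commutator subgroup.
-/

section PowerMap

open scoped commutatorElement

variable {G : Type*} [Group G]

theorem mul_pow_of_commute_commutatorElement {a b : G} (ha : Commute ⁅a, b⁆ a)
    (hb : Commute ⁅a, b⁆ b) (n : ℕ) : (b * a) ^ n = b ^ n * a ^ n * ⁅a, b⁆ ^ n.choose 2 := by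
  have h_semiconj : SemiconjBy b (a * ⁅a, b⁆) a := by
    rw [SemiconjBy, ← mul_assoc, ← (hb.mul_right ha).eq, commutatorElement_def]
    group
  have swap_pow (k : ℕ) : a ^ k * b = b * a ^ k * ⁅a, b⁆ ^ k := by
    rw [mul_assoc, ← ha.symm.mul_pow, (h_semiconj.pow_right k).eq]
  induction n with
  | zero => simp
  | succ n ih =>
    calc (b * a) ^ (n + 1)
      _ = b ^ n * a ^ n * (⁅a, b⁆ ^ n.choose 2 * (b * a)) := by rw [pow_succ, ih, mul_assoc]
      _ = b ^ n * (a ^ n * b) * a * ⁅a, b⁆ ^ n.choose 2 := by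
        rw [((hb.mul_right ha).pow_left _).eq]; simp only [mul_assoc]
      _ = b ^ n * b * a ^ n * (⁅a, b⁆ ^ n * a) * ⁅a, b⁆ ^ n.choose 2 := by
        rw [swap_pow]; simp only [mul_assoc]
      _ = b ^ (n + 1) * a ^ (n + 1) * ⁅a, b⁆ ^ (n + 1).choose 2 := by
        rw [(ha.pow_left n).eq, Nat.choose_succ_succ' n 1, Nat.choose_one_right, pow_add ⁅a, b⁆,
          pow_succ a, pow_succ b]
        simp only [mul_assoc]

theorem dvd_choose_two_of_odd {n : ℕ} (hn : Odd n) : n ∣ n.choose 2 := by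
  obtain ⟨m, rfl⟩ := hn
  refine ⟨m, ?_⟩
  rw [Nat.choose_two_right, Nat.add_sub_cancel, mul_left_comm, Nat.mul_div_cancel_left _ two_pos]

theorem mem_Omega1_of_pow_eq_one {n : ℕ} {x : G} (h : x ^ n = 1) : x ∈ Omega1 n G :=
  Subgroup.subset_closure h

theorem pow_eq_one_of_mul_pow_eq_pow {n : ℕ} (hn : Odd n)
    (hΩ : Omega1 n G ≤ Subgroup.center G) {k : ℕ} {a b : G}
    (hb : b ∈ Subgroup.upperCentralSeries G k) (h : (b * a) ^ n = a ^ n) : b ^ n = 1 := by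
  induction k generalizing a b with
  | zero => rw [Subgroup.mem_bot.1 hb, one_pow]
  | succ k ih =>
    have h_swap : (a * b) ^ n = (b * a) ^ n := by
      rw [← mul_inv_cancel_right (a * b) a, mul_assoc a b a, conj_pow, h,
        (Commute.self_pow a n).mul_inv_cancel]
    have h_comm_mem : ⁅a, b⁆ ∈ Subgroup.upperCentralSeries G k := by
      rw [← commutatorElement_inv]
      exact inv_mem (Subgroup.mem_upperCentralSeries_succ_iff.1 hb a)
    have h_comm_pow : ⁅a, b⁆ ^ n = 1 :=
      ih h_comm_mem (a := b * a) (by rw [← h_swap, commutatorElement_def]; group)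
    have h_commute (g : G) : Commute ⁅a, b⁆ g :=
      (Subgroup.mem_center_iff.1 (hΩ (mem_Omega1_of_pow_eq_one h_comm_pow)) g).symm
    obtain ⟨m, hm⟩ := dvd_choose_two_of_odd hn
    rw [mul_pow_of_commute_commutatorElement (h_commute a) (h_commute b), hm, pow_mul, h_comm_pow,
      one_pow, mul_one] at h
    exact mul_eq_right.1 h

theorem mul_inv_pow_eq_one_of_pow_eq_pow [Group.IsNilpotent G] {n : ℕ} (hn : Odd n)
    (hΩ : Omega1 n G ≤ Subgroup.center G) {x y : G} (h : x ^ n = y ^ n) : (x * y⁻¹) ^ n = 1 := by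
  obtain ⟨k, hk⟩ := Group.IsNilpotent.nilpotent G
  refine pow_eq_one_of_mul_pow_eq_pow hn hΩ (k := k) (hk ▸ Subgroup.mem_top _) (a := y) ?_
  rwa [inv_mul_cancel_right]

theorem index_Omega1_le_card_pPowFin [Finite G] [Group.IsNilpotent G] {n : ℕ} (hn : Odd n)
    (hΩ : Omega1 n G ≤ Subgroup.center G) : (Omega1 n G).index ≤ Nat.card (pPowFin n G) := by
  refine Nat.card_le_card_of_injective
    (fun q => ⟨q.out ^ n, Subgroup.subset_closure ⟨_, rfl⟩⟩) fun q r h => ?_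
  have h_inv : q.out⁻¹ ^ n = r.out⁻¹ ^ n := by rw [inv_pow, inv_pow, Subtype.mk.inj h]
  have h_pow := mul_inv_pow_eq_one_of_pow_eq_pow hn hΩ h_inv
  rw [← q.out_eq', ← r.out_eq']
  exact QuotientGroup.eq.2 (mem_Omega1_of_pow_eq_one (by rwa [inv_inv] at h_pow))

theorem index_pPowFin_le_card_Omega1 [Finite G] [Group.IsNilpotent G] {n : ℕ} (hn : Odd n)
    (hΩ : Omega1 n G ≤ Subgroup.center G) : (pPowFin n G).index ≤ Nat.card (Omega1 n G) := by
  refine Nat.le_of_mul_le_mul_left ?_ (Nat.card_pos (α := pPowFin n G))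
  calc Nat.card (pPowFin n G) * (pPowFin n G).index
      = (Omega1 n G).index * Nat.card (Omega1 n G) := by
        rw [Subgroup.card_mul_index, Subgroup.index_mul_card]
    _ ≤ Nat.card (pPowFin n G) * Nat.card (Omega1 n G) :=
        Nat.mul_le_mul_right _ (index_Omega1_le_card_pPowFin hn hΩ)

end PowerMap

section Frattini

variable {G : Type*} [Group G]

theorem isSimpleGroup_quotient_of_isCoatom {M : Subgroup G} [M.Normal] (hM : IsCoatom M) :
    IsSimpleGroup (G ⧸ M) := by
  have := Set.isSimpleOrder_Ici_iff_isCoatom.2 hM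
  let e : Subgroup (G ⧸ M) ≃o Set.Ici M := QuotientGroup.comapMk'OrderIso M
  have : IsSimpleOrder (Subgroup (G ⧸ M)) := e.isSimpleOrder
  have := Subgroup.nontrivial_iff.1 this.toNontrivial
  exact ⟨fun H _ => eq_bot_or_eq_top H⟩

section Nilpotent

variable [Group.IsNilpotent G] {M : Subgroup G}

theorem normal_of_isCoatom (hM : IsCoatom M) : M.Normal :=
  Subgroup.NormalizerCondition.normal_of_coatom M Group.normalizerCondition_of_isNilpotent hM

theorem commutator_le_of_isCoatom (hM : IsCoatom M) : commutator G ≤ M := by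
  have := normal_of_isCoatom hM
  have := isSimpleGroup_quotient_of_isCoatom hM
  exact Subgroup.Normal.quotient_commutative_iff_commutator_le.1 inferInstance

theorem prime_index_of_isCoatom (hM : IsCoatom M) : M.index.Prime := by
  have := normal_of_isCoatom hM
  have := isSimpleGroup_quotient_of_isCoatom hM
  exact IsSimpleGroup.prime_card

variable (G) in
theorem commutator_le_frattini : commutator G ≤ frattini G :=
  le_iInf₂ fun _ hM => commutator_le_of_isCoatom hM

variable {p : ℕ} [Fact p.Prime]

theorem index_eq_of_isCoatom (hG : IsPGroup p G) (hM : IsCoatom M) : M.index = p := by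
  have h_prime := prime_index_of_isCoatom hM
  have : M.FiniteIndex := ⟨h_prime.ne_zero⟩
  obtain ⟨k, hk⟩ := hG.index M
  exact (Nat.prime_dvd_prime_iff_eq h_prime Fact.out).1 (h_prime.dvd_of_dvd_pow hk.dvd)

theorem pPowFin_le_frattini (hG : IsPGroup p G) : pPowFin p G ≤ frattini G := by
  refine (Subgroup.closure_le _).2 ?_
  rintro _ ⟨g, rfl⟩
  simp only [frattini, Order.radical, SetLike.mem_coe, Subgroup.mem_iInf]
  intro M hM
  have := normal_of_isCoatom hM
  exact index_eq_of_isCoatom hG hM ▸ M.pow_index_mem g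

end Nilpotent

end Frattini

section Rank

variable {G : Type*} [Group G]

variable (G) in
theorem genNum_eq_rank [Group.FG G] : genNum G = Group.rank G := by
  obtain ⟨S, hS, hS_top⟩ := Group.rank_spec G
  refine le_antisymm (Nat.sInf_le ⟨S, hS, hS_top⟩) (le_csInf ⟨_, S, hS, hS_top⟩ ?_)
  rintro _ ⟨T, rfl, hT⟩
  exact Group.rank_le hT

theorem rank_le_rank_add_one_of_isCoatom [Group.FG G] {M : Subgroup G} [Group.FG M]
    (hM : IsCoatom M) : Group.rank G ≤ Group.rank M + 1 := by
  classical
  obtain ⟨S, hS, hS_top⟩ := Group.rank_spec M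
  obtain ⟨x, hx⟩ := SetLike.exists_not_mem_of_ne_top M hM.1
  set T : Finset G := insert x (S.image M.subtype)
  have hM_le : M ≤ Subgroup.closure (T : Set G) := by
    rw [← M.range_subtype, MonoidHom.range_eq_map, ← hS_top, MonoidHom.map_closure]
    exact Subgroup.closure_mono (by simp [T])
  have hT : Subgroup.closure (T : Set G) = ⊤ :=
    hM.2 _ (SetLike.lt_iff_le_and_exists.2
      ⟨hM_le, x, Subgroup.subset_closure (by simp [T]), hx⟩)
  calc Group.rank G ≤ T.card := Group.rank_le hT
    _ ≤ (S.image M.subtype).card + 1 := Finset.card_insert_le _ _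
    _ ≤ Group.rank M + 1 := by rw [← hS]; gcongr; exact Finset.card_image_le

theorem pow_rank_le_card {p : ℕ} [Fact p.Prime] [Finite G] (hG : IsPGroup p G) :
    p ^ Group.rank G ≤ Nat.card G := by
  induction hn : Nat.card G using Nat.strong_induction_on generalizing G with
  | _ n ih =>
  subst hn
  have := hG.isNilpotent
  obtain _ | _ := subsingleton_or_nontrivial G
  · rw [Group.rank_eq_zero, pow_zero]
    exact Nat.card_pos
  · obtain ⟨M, hM⟩ := IsCoatomic.exists_coatom (Subgroup G)
    have h_card : Nat.card M * p = Nat.card G := by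
      rw [← index_eq_of_isCoatom hG hM, M.card_mul_index]
    have h_lt : Nat.card M < Nat.card G :=
      h_card ▸ lt_mul_of_one_lt_right Nat.card_pos (Fact.out : p.Prime).one_lt
    calc p ^ Group.rank G
      _ ≤ p ^ (Group.rank M + 1) :=
        Nat.pow_le_pow_right (Fact.out : p.Prime).pos (rank_le_rank_add_one_of_isCoatom hM)
      _ ≤ Nat.card M * p := Nat.mul_le_mul_right p (ih _ h_lt (hG.to_subgroup M) rfl)
      _ = Nat.card G := h_card

variable (G) in
theorem rank_quotient_frattini [Group.FG G] [IsCoatomic (Subgroup G)] :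
    Group.rank (G ⧸ frattini G) = Group.rank G := by
  classical
  refine le_antisymm (Group.rank_le_of_surjective _ (QuotientGroup.mk'_surjective _)) ?_
  obtain ⟨S, hS, hS_top⟩ := Group.rank_spec (G ⧸ frattini G)
  set T : Finset G := S.image Quotient.out
  have hT_map : (Subgroup.closure (T : Set G)).map (QuotientGroup.mk' (frattini G)) = ⊤ := by
    rw [MonoidHom.map_closure, ← hS_top]
    congr 1
    ext q
    simp [T]
  have hT : Subgroup.closure (T : Set G) = ⊤ := by
    refine frattini_nongenerating ?_
    rw [← QuotientGroup.ker_mk' (frattini G), ← Subgroup.comap_map_eq, hT_map, Subgroup.comap_top]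
  calc Group.rank G ≤ T.card := Group.rank_le hT
    _ ≤ S.card := Finset.card_image_le
    _ = Group.rank (G ⧸ frattini G) := hS

theorem pow_rank_le_index_frattini {p : ℕ} [Fact p.Prime] [Finite G] (hG : IsPGroup p G) :
    p ^ Group.rank G ≤ (frattini G).index :=
  rank_quotient_frattini G ▸ pow_rank_le_card (hG.to_quotient (frattini G))

end Rank

/-- For `p ≥ 3`, a `p`-central finite `p`-group with `d(G) = log_p |Ω₁(G)|` is powerful. -/
theorem powerful_of_pCentral (p : ℕ) (hp : p.Prime) (hp3 : 3 ≤ p)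
    (G : Type*) [Group G] [Finite G] (hG : IsPGroup p G)
    (hcentral : Omega1 p G ≤ Subgroup.center G)
    (hd : p ^ genNum G = Nat.card (Omega1 p G)) :
    commutator G ≤ pPowFin p G := by
  have := Fact.mk hp
  have := hG.isNilpotent
  have h_odd : Odd p := hp.odd_of_ne_two (by omega)
  have h_index : (pPowFin p G).index ≤ (frattini G).index :=
    calc (pPowFin p G).index
      _ ≤ Nat.card (Omega1 p G) := index_pPowFin_le_card_Omega1 h_odd hcentral
      _ = p ^ Group.rank G := by rw [← hd, genNum_eq_rank]
      _ ≤ (frattini G).index := pow_rank_le_index_frattini hG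
  have h_eq : pPowFin p G = frattini G :=
    (pPowFin_le_frattini hG).eq_of_not_lt fun h => (Subgroup.index_strictAnti h).not_ge h_index
  exact h_eq ▸ commutator_le_frattini G
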